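/- Let S be a regular integral scheme of dimension d over an algebraically closed field k of characteristic ≠ 2, let x be a point of S of codimension ≥ i (for a fixed i > 0), and let K_x be the fraction field of the completion of the local ring O_{S,x}. If q is a quadratic form over the complete local ring Ô_{S,x} of rank > 2^{d−i} + 1 whose reduction has radical of rank ≤ 1 (simple degeneration), then q is isotropic over K_x. -/

import Mathlib

/-!
STATEMENT 19: Let S be a regular integral scheme of dimension d over an algebraically
closed field k of characteristic ≠ 2, x a point of S of codimension ≥ i (for fixed
i > 0), and K_x the fraction field of the completion Ô_{S,x} of the local ring O_{S,x}.
If q is a quadratic form over Ô_{S,x} of rank > 2^{d−i} + 1 whose reduction has radical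
of rank ≤ 1 (simple degeneration), then q is isotropic over K_x.

Here: regularity of S is expressed by each stalk having its maximal ideal generated by
dim-many elements; "codimension ≥ i" by a strictly specializing chain of length i ending
at x; the completion is the adic completion of the stalk at its maximal ideal; "radical
of the reduction has rank ≤ 1" via the submodule {v | ∀ w, polar q v w ∈ m̂} being
contained in span{v₀} ⊔ m̂•⊤, where m̂ is the extension of the maximal ideal; and
isotropy over the fraction field K_x of the (domain) Ô_{S,x} is equivalent, by clearing
denominators, to the existence of a nonzero isotropic vector over Ô_{S,x}.
-/

open AlgebraicGeometry

/-- The preimage in `V` of the radical of the reduction of `q` modulo `m`. -/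
def QuadraticMap.residualRadical {R V : Type*} [CommRing R] [AddCommGroup V] [Module R V]
    (m : Ideal R) (q : QuadraticForm R V) : Submodule R V where
  carrier := {v | ∀ w, QuadraticMap.polar q v w ∈ m}
  add_mem' := fun hx hy w => by
    rw [QuadraticMap.polar_add_left]; exact Ideal.add_mem m (hx w) (hy w)
  zero_mem' := fun w => by
    rw [QuadraticMap.polar_zero_left]; exact m.zero_mem
  smul_mem' := fun c x hx w => by
    rw [QuadraticMap.polar_smul_left, smul_eq_mul]; exact Ideal.mul_mem_left m c (hx w)

/-- The completed local ring `Ô_{X,x}` of a scheme at a point. -/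
noncomputable abbrev completedStalk (X : Scheme) (x : X) : Type _ :=
  AdicCompletion (IsLocalRing.maximalIdeal (X.presheaf.stalk x)) (X.presheaf.stalk x)

/-- Every system of `m` quadratic forms in more than `m * 2 ^ r` variables over `K` has a
nontrivial common zero. -/
def QuadSys (r : ℕ) (K : Type*) [Field K] : Prop :=
  ∀ (m N : ℕ) (a : Fin m → Fin N → Fin N → K), m * 2 ^ r < N →
    ∃ x : Fin N → K, x ≠ 0 ∧ ∀ l, ∑ i, ∑ j, a l i j * x i * x j = 0

theorem QuadSys.fintype {r : ℕ} {K : Type*} [Field K] (h : QuadSys r K)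
    {ι σ : Type*} [Fintype ι] [Fintype σ] (a : ι → σ → σ → K)
    (hc : Fintype.card ι * 2 ^ r < Fintype.card σ) :
    ∃ x : σ → K, x ≠ 0 ∧ ∀ l, ∑ i, ∑ j, a l i j * x i * x j = 0 := by
  let e := Fintype.equivFin ι
  let g := Fintype.equivFin σ
  obtain ⟨x, hx, hz⟩ := h _ _ (fun l i j => a (e.symm l) (g.symm i) (g.symm j)) hc
  refine ⟨x ∘ g, ?_, fun l => ?_⟩
  · intro h0
    apply hx
    funext i
    have := congrFun h0 (g.symm i)
    simpa using this
  · have := hz (e l)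
    rw [← g.sum_comp] at this
    rw [← this]
    refine Finset.sum_congr rfl fun i _ => ?_
    rw [← g.sum_comp]
    simp

theorem QuadSys.mono {r s : ℕ} {K : Type*} [Field K] (h : QuadSys r K) (hrs : r ≤ s) :
    QuadSys s K := fun m N a hN => h m N a
      (lt_of_le_of_lt (Nat.mul_le_mul_left _ (Nat.pow_le_pow_right (by norm_num) hrs)) hN)

theorem QuadSys.finite_ext {r : ℕ} {L F : Type*} [Field L] [Field F] [Algebra L F]
    [FiniteDimensional L F] (h : QuadSys r L) : QuadSys r F := by
  intro m N a hN
  let b := Module.finBasis L F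
  obtain ⟨y, hy, hz⟩ := h.fintype
    (ι := Fin m × Fin (Module.finrank L F)) (σ := Fin N × Fin (Module.finrank L F))
    (fun l i j => b.repr (a l.1 i.1 j.1 * b i.2 * b j.2) l.2) (by
      have : 0 < Module.finrank L F := Module.finrank_pos
      simp only [Fintype.card_prod, Fintype.card_fin]
      nlinarith)
  refine ⟨fun i => ∑ u, y (i, u) • b u, ?_, fun l => ?_⟩
  · intro h0
    apply hy
    funext ⟨i, u⟩
    exact Fintype.linearIndependent_iff.1 b.linearIndependent _ (congrFun h0 i) u
  · apply b.repr.injective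
    ext w
    have := hz (l, w)
    simp only [Fintype.sum_prod_type] at this
    rw [map_zero, Finsupp.zero_apply, ← this]
    simp only [Finset.mul_sum, Finset.sum_mul, map_sum, Finsupp.coe_finsetSum, Finset.sum_apply]
    refine Finset.sum_congr rfl fun i _ => ?_
    conv_rhs => rw [Finset.sum_comm]
    refine Finset.sum_congr rfl fun j _ => ?_
    rw [Finset.sum_comm]
    refine Finset.sum_congr rfl fun u _ => ?_
    refine Finset.sum_congr rfl fun v _ => ?_
    rw [show a l i j * y (i, u) • b u * y (j, v) • b v
      = (y (i, u) * y (j, v)) • (a l i j * b u * b v) by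
        simp only [Algebra.smul_def, map_mul]; ring]
    simp only [map_smul, Finsupp.smul_apply, smul_eq_mul]
    ring

theorem QuadSys.algebraic_ext {r : ℕ} {L K : Type*} [Field L] [Field K] [Algebra L K]
    [Algebra.IsAlgebraic L K] (h : QuadSys r L) : QuadSys r K := by
  intro m N a hN
  let S : Set K := Set.range (fun p : Fin m × Fin N × Fin N => a p.1 p.2.1 p.2.2)
  have : Finite S := (Set.finite_range _).to_subtype
  have hfd : FiniteDimensional L (IntermediateField.adjoin L S) :=
    IntermediateField.finiteDimensional_adjoin fun x _ => Algebra.IsIntegral.isIntegral x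
  obtain ⟨x, hx, hz⟩ := (h.finite_ext (F := IntermediateField.adjoin L S)) m N
    (fun l i j => ⟨a l i j, IntermediateField.subset_adjoin L S ⟨(l, i, j), rfl⟩⟩) hN
  refine ⟨fun i => x i, ?_, fun l => ?_⟩
  · intro h0
    apply hx
    funext i
    exact Subtype.ext (congrFun h0 i)
  · have := congrArg (Subtype.val) (hz l)
    simpa using this

open Polynomial in
theorem QuadSys.simple_ext {r : ℕ} {L K : Type*} [Field L] [Field K] [Algebra L K]
    (h : QuadSys r L) (t : K)
    (ht : ∀ z : K, ∃ p q : L[X], z = aeval t p / aeval t q) : QuadSys (r + 1) K := by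
  by_cases halg : IsAlgebraic L t
  · have : Algebra.IsAlgebraic L K := ⟨fun z => by
      obtain ⟨p, q, rfl⟩ := ht z
      have hp : ∀ p : L[X], IsAlgebraic L (aeval t p) := fun p => by
        have h1 : IsIntegral L t := halg.isIntegral
        exact (IsIntegral.isAlgebraic (by
          have := adjoin_le_integralClosure h1 (aeval_mem_adjoin_singleton L t (p := p))
          exact this))
      rw [div_eq_mul_inv]
      exact (hp p).mul (hp q).inv⟩
    exact (h.algebraic_ext (K := K)).mono (Nat.le_succ r)
  have hinj : Function.Injective (aeval (R := L) t) := transcendental_iff_injective.1 halg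
  intro m N a hN
  classical
  -- clear denominators
  obtain ⟨D, hD, A, hA⟩ : ∃ D : K, D ≠ 0 ∧ ∃ A : Fin m → Fin N → Fin N → L[X],
      ∀ l i j, aeval t (A l i j) = D * a l i j := by
    choose p q hpq using ht
    have key : ∀ z, ∃ p q : L[X], aeval t q ≠ 0 ∧ z = aeval t p / aeval t q := by
      intro z
      by_cases hq : aeval t (q z) = 0
      · refine ⟨0, 1, by simp, ?_⟩
        rw [hpq z, hq]; simp
      · exact ⟨p z, q z, hq, hpq z⟩
    choose p q hq hpq using key
    let Q : Fin m × Fin N × Fin N → L[X] := fun w => q (a w.1 w.2.1 w.2.2)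
    refine ⟨aeval t (∏ w, Q w), ?_, fun l i j =>
      p (a l i j) * ∏ w ∈ Finset.univ.erase (l, i, j), Q w, fun l i j => ?_⟩
    · rw [map_prod, Finset.prod_ne_zero_iff]
      exact fun w _ => hq _
    · rw [← Finset.mul_prod_erase _ _ (Finset.mem_univ (l, i, j)), map_mul, map_mul]
      conv_rhs => rw [hpq (a l i j)]
      have := hq (a l i j)
      simp only [Q]
      field_simp
  let δ := Finset.univ.sup (fun w : Fin m × Fin N × Fin N => (A w.1 w.2.1 w.2.2).natDegree)
  have hδ : ∀ l i j, (A l i j).natDegree ≤ δ := fun l i j =>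
    Finset.le_sup (f := fun w : Fin m × Fin N × Fin N => (A w.1 w.2.1 w.2.2).natDegree)
      (Finset.mem_univ (l, i, j))
  let s := m * 2 ^ r * δ
  obtain ⟨y, hy, hz⟩ := h.fintype
    (ι := Fin m × Fin (2 * s + δ + 1)) (σ := Fin N × Fin (s + 1))
    (fun l i j => (A l.1 i.1 j.1 * X ^ (i.2 : ℕ) * X ^ (j.2 : ℕ)).coeff l.2) (by
      simp only [Fintype.card_prod, Fintype.card_fin]
      have hs : s = m * 2 ^ r * δ := rfl
      clear_value s
      rw [pow_succ] at hN
      generalize h2 : 2 ^ r = R at *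
      have h1 : (2 * (m * R) + 1) * (s + 1) ≤ N * (s + 1) :=
        Nat.mul_le_mul_right _ (by nlinarith)
      refine lt_of_lt_of_le ?_ h1
      nlinarith)
  let x : Fin N → L[X] := fun i => ∑ u : Fin (s + 1), C (y (i, u)) * X ^ (u : ℕ)
  have hxc : ∀ i (u : Fin (s + 1)), (x i).coeff u = y (i, u) := by
    intro i u
    simp only [x, finsetSum_coeff, coeff_C_mul, coeff_X_pow]
    rw [Finset.sum_eq_single u]
    · simp
    · intro v _ hv
      have : (u : ℕ) ≠ v := fun h => hv (Fin.ext h.symm)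
      simp [this]
    · simp
  have hxd : ∀ i, (x i).natDegree ≤ s := by
    intro i
    refine natDegree_sum_le_of_forall_le _ _ fun u _ => ?_
    exact (natDegree_C_mul_X_pow_le _ _).trans (Nat.lt_succ_iff.1 u.2)
  have hzero : ∀ l, ∑ i, ∑ j, A l i j * x i * x j = 0 := by
    intro l
    ext e
    rw [coeff_zero]
    by_cases he : e < 2 * s + δ + 1
    · have := hz (l, ⟨e, he⟩)
      simp only [Fintype.sum_prod_type] at this
      rw [← this]
      simp only [x, Finset.mul_sum, Finset.sum_mul, finsetSum_coeff]
      refine Finset.sum_congr rfl fun i _ => ?_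
      conv_rhs => rw [Finset.sum_comm]
      refine Finset.sum_congr rfl fun j _ => ?_
      rw [Finset.sum_comm]
      refine Finset.sum_congr rfl fun u _ => ?_
      refine Finset.sum_congr rfl fun v _ => ?_
      rw [show A l i j * (C (y (i, u)) * X ^ (u : ℕ)) * (C (y (j, v)) * X ^ (v : ℕ))
        = C (y (i, u) * y (j, v)) * (A l i j * X ^ (u : ℕ) * X ^ (v : ℕ)) by
          rw [C_mul]; ring, coeff_C_mul]
      ring
    · apply coeff_eq_zero_of_natDegree_lt
      refine lt_of_le_of_lt (b := 2 * s + δ) ?_ (by omega)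
      refine natDegree_sum_le_of_forall_le _ _ fun i _ => ?_
      refine natDegree_sum_le_of_forall_le _ _ fun j _ => ?_
      refine natDegree_mul_le.trans ?_
      have h1 := natDegree_mul_le (p := A l i j) (q := x i)
      have := hδ l i j
      have := hxd i
      have := hxd j
      omega
  refine ⟨fun i => aeval t (x i), ?_, fun l => ?_⟩
  · intro h0
    apply hy
    funext ⟨i, u⟩
    have h1 : x i = 0 := hinj (by simpa using congrFun h0 i)
    rw [← hxc, h1]; simp
  · have := congrArg (aeval t) (hzero l)
    simp only [map_sum, map_mul, hA, map_zero] at this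
    apply mul_left_cancel₀ hD
    rw [mul_zero, ← this]
    simp only [Finset.mul_sum, mul_assoc]

theorem vanishing_height {k : Type*} [Field k] [IsAlgClosed k] (N : ℕ) (z : Fin N → k) :
    (N : ℕ∞) ≤ (MvPolynomial.vanishingIdeal k {z} : Ideal (MvPolynomial (Fin N) k)).height := by
  have hall : ∀ w : Fin N → k,
      (MvPolynomial.vanishingIdeal k {w} : Ideal (MvPolynomial (Fin N) k)).height =
      (MvPolynomial.vanishingIdeal k {z} : Ideal (MvPolynomial (Fin N) k)).height := by
    intro w
    let T : (Fin N → k) → (MvPolynomial (Fin N) k →ₐ[k] MvPolynomial (Fin N) k) := fun v =>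
      MvPolynomial.aeval (fun i => MvPolynomial.X i + MvPolynomial.C (v i))
    let e : MvPolynomial (Fin N) k ≃ₐ[k] MvPolynomial (Fin N) k :=
      AlgEquiv.ofAlgHom (T (z - w)) (T (w - z))
        (by
          refine MvPolynomial.algHom_ext fun i => ?_
          simp only [T, AlgHom.comp_apply, MvPolynomial.aeval_X, map_add,
            MvPolynomial.algHom_C, Pi.sub_apply, map_sub, MvPolynomial.algebraMap_eq,
            AlgHom.id_apply]
          ring) (by
          refine MvPolynomial.algHom_ext fun i => ?_
          simp only [T, AlgHom.comp_apply, MvPolynomial.aeval_X, map_add,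
            MvPolynomial.algHom_C, Pi.sub_apply, map_sub, MvPolynomial.algebraMap_eq,
            AlgHom.id_apply]
          ring)
    have := RingEquiv.height_comap e.toRingEquiv (MvPolynomial.vanishingIdeal k {w})
    rw [← this]
    congr 1
    ext p
    have h2 : (MvPolynomial.aeval w).comp e.toAlgHom = MvPolynomial.aeval (R := k) z := by
      ext i; simp [e, T]
    have h3 := DFunLike.congr_fun h2 p
    simp only [AlgHom.comp_apply] at h3
    simp only [Ideal.mem_comap, MvPolynomial.mem_vanishingIdeal_singleton_iff]
    rw [← h3]
    rfl
  have hdim := MvPolynomial.ringKrullDim_of_isNoetherianRing (R := k) (ι := Fin N)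
  rw [ringKrullDim_eq_zero_of_field, zero_add, Nat.card_fin] at hdim
  have h2 : ringKrullDim (MvPolynomial (Fin N) k) ≤
      ((MvPolynomial.vanishingIdeal k {z} : Ideal (MvPolynomial (Fin N) k)).height : WithBot ℕ∞) := by
    rw [ringKrullDim_le_iff_isMaximal_height_le]
    intro I hI
    obtain ⟨w, rfl⟩ := MvPolynomial.isMaximal_iff_eq_vanishingIdeal_singleton.1 hI
    rw [hall w]
  rw [hdim] at h2
  exact_mod_cast h2

theorem QuadSys.algClosed {k : Type*} [Field k] [IsAlgClosed k] : QuadSys 0 k := by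
  intro m N a hN
  simp only [pow_zero, mul_one] at hN
  by_contra! hcon
  let F : Fin m → MvPolynomial (Fin N) k := fun l =>
    ∑ i, ∑ j, MvPolynomial.C (a l i j) * MvPolynomial.X i * MvPolynomial.X j
  let I : Ideal (MvPolynomial (Fin N) k) := Ideal.span (Set.range F)
  have hF : ∀ l x, MvPolynomial.aeval x (F l) = ∑ i, ∑ j, a l i j * x i * x j := by
    intro l x
    simp [F]
  have hZ : MvPolynomial.zeroLocus k I = {0} := by
    ext x
    rw [MvPolynomial.zeroLocus_span]
    simp only [Set.mem_ofPred_eq, Set.forall_mem_range, Set.mem_singleton_iff, hF]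
    constructor
    · intro h
      by_contra hx
      obtain ⟨l, hl⟩ := hcon x hx
      exact hl (h l)
    · rintro rfl l
      simp
  have hrad := MvPolynomial.vanishingIdeal_zeroLocus_eq_radical (k := k) (K := k) I
  rw [hZ] at hrad
  have h1 := vanishing_height N (0 : Fin N → k)
  have hIne : I ≠ ⊤ := by
    intro h
    have : I.radical = ⊤ := by rw [h, Ideal.radical_top]
    rw [← hrad] at this
    exact (inferInstance : (MvPolynomial.vanishingIdeal k {(0 : Fin N → k)}).IsPrime).ne_top this
  have h2 : I.height ≤ m := by
    refine (Ideal.height_le_spanFinrank I hIne).trans ?_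
    have := Submodule.spanFinrank_span_le_ncard_of_finite (R := MvPolynomial (Fin N) k) (Set.finite_range F)
    have h3 : (Set.range F).ncard ≤ m := by
      rw [← Set.image_univ]
      refine (Set.ncard_image_le Set.finite_univ).trans ?_
      simp [Set.ncard_univ]
    exact_mod_cast this.trans h3
  obtain ⟨n, hn⟩ := ENat.ne_top_iff_exists.1 (ne_top_of_le_ne_top (ENat.natCast_ne_top m) h2)
  obtain ⟨P, hP, hIP, hPh⟩ := Ideal.exists_isPrime_height_eq hn.symm
  have h3 : (MvPolynomial.vanishingIdeal k {(0 : Fin N → k)}).height ≤ P.height :=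
    Ideal.height_mono (by rw [hrad]; exact hP.radical_le_iff.2 hIP)
  rw [hPh, hn] at h3
  have := (h1.trans h3).trans h2
  have : N ≤ m := by exact_mod_cast this
  omega

theorem QuadSys.adjoin {k K : Type*} [Field k] [IsAlgClosed k] [Field K] [Algebra k K] :
    ∀ (s : ℕ) (t : Fin s → K), QuadSys s (IntermediateField.adjoin k (Set.range t)) := by
  intro s
  induction s with
  | zero =>
    intro t
    have : Algebra.IsAlgebraic k (IntermediateField.adjoin k (Set.range t)) :=
      IntermediateField.isAlgebraic_adjoin (by rintro x ⟨i, _⟩; exact i.elim0)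
    exact (QuadSys.algClosed (k := k)).algebraic_ext
  | succ s ih =>
    intro t
    set L := IntermediateField.adjoin k (Set.range (t ∘ Fin.castSucc)) with hL
    set M := IntermediateField.adjoin k (Set.range t) with hM
    have hLM : L ≤ M := IntermediateField.adjoin.mono _ _ _ (by
      rintro _ ⟨i, rfl⟩; exact ⟨_, rfl⟩)
    let _ : Algebra L M := (IntermediateField.inclusion hLM).toRingHom.toAlgebra
    have : IsScalarTower L M K := IsScalarTower.of_algebraMap_eq (fun _ => rfl)
    have htM : t (Fin.last s) ∈ M := IntermediateField.subset_adjoin _ _ ⟨_, rfl⟩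
    refine (ih (t ∘ Fin.castSucc)).simple_ext (K := M) ⟨t (Fin.last s), htM⟩ ?_
    intro z
    have hz : (z : K) ∈ IntermediateField.adjoin L {t (Fin.last s)} := by
      have hle : M ≤ (IntermediateField.adjoin L {t (Fin.last s)}).restrictScalars k := by
        rw [hM, IntermediateField.adjoin_le_iff]
        rintro _ ⟨i, rfl⟩
        refine Fin.lastCases ?_ (fun j => ?_) i
        · exact IntermediateField.mem_adjoin_simple_self L _
        · have : t j.castSucc ∈ L := IntermediateField.subset_adjoin _ _ ⟨j, rfl⟩
          exact (IntermediateField.adjoin L {t (Fin.last s)}).algebraMap_mem ⟨_, this⟩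
      exact hle z.2
    obtain ⟨p, q, hpq⟩ := (IntermediateField.mem_adjoin_simple_iff L _).1 hz
    refine ⟨p, q, Subtype.ext ?_⟩
    rw [hpq]
    have hc : ∀ p : Polynomial L, ((Polynomial.aeval (⟨t (Fin.last s), htM⟩ : M) p : M) : K)
        = Polynomial.aeval (t (Fin.last s)) p := fun p =>
      (Polynomial.aeval_algebraMap_apply K (⟨t (Fin.last s), htM⟩ : M) p).symm
    push_cast
    rw [hc, hc]

theorem exists_lt_of_succ_le_height {α : Type*} [Preorder α] {p : α} {n : ℕ}
    (h : ((n + 1 : ℕ) : ℕ∞) ≤ Order.height p) : ∃ p' < p, (n : ℕ∞) ≤ Order.height p' := by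
  obtain ⟨l, hl, hlen⟩ := Order.exists_series_of_le_height p h
  refine ⟨l.eraseLast.last, ?_, ?_⟩
  · rw [← hl]
    exact l.eraseLast_last_rel_last (by omega)
  · have := Order.length_le_height_last (p := l.eraseLast)
    simpa [hlen] using this

theorem going_up_height {R S : Type*} [CommRing R] [CommRing S] [Algebra R S]
    [Algebra.IsIntegral R S] (hinj : Function.Injective (algebraMap R S)) (n : ℕ) :
    ∀ p : PrimeSpectrum R, (n : ℕ∞) ≤ Order.height p →
      ∃ P : PrimeSpectrum S, P.asIdeal.comap (algebraMap R S) = p.asIdeal ∧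
        (n : ℕ∞) ≤ Order.height P := by
  induction n with
  | zero =>
    intro p _
    obtain ⟨Q, -, hQ, hQp⟩ := Ideal.exists_ideal_over_prime_of_isIntegral p.asIdeal (⊥ : Ideal S)
      (by
        intro x hx
        have : x = 0 := hinj (by simpa using hx)
        rw [this]; exact zero_mem _)
    exact ⟨⟨Q, hQ⟩, hQp, by simp⟩
  | succ n ih =>
    intro p hp
    obtain ⟨p', hp', hh⟩ := exists_lt_of_succ_le_height hp
    obtain ⟨P', hP', hPh⟩ := ih p' hh
    obtain ⟨Q, hle, hQ, hQp⟩ := Ideal.exists_ideal_over_prime_of_isIntegral p.asIdeal P'.asIdeal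
      (by rw [hP']; exact hp'.le)
    have hlt : P' < ⟨Q, hQ⟩ := by
      refine lt_of_le_of_ne hle ?_
      rintro rfl
      apply hp'.ne
      ext1
      rw [← hP', ← hQp]
    refine ⟨⟨Q, hQ⟩, hQp, ?_⟩
    push_cast
    exact (add_le_add_left hPh 1).trans (Order.height_add_one_le hlt)

theorem height_add_le {A B : Type*} [CommRing A] [CommRing B] (φ : A →+* B)
    (hφ : Function.Surjective φ) (p : PrimeSpectrum A) (hp : p.asIdeal ≤ RingHom.ker φ)
    (i : ℕ) (hi : (i : ℕ∞) ≤ Order.height p) (n : ℕ) :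
    ∀ P : PrimeSpectrum B, (n : ℕ∞) ≤ Order.height P →
      ((i + n : ℕ) : ℕ∞) ≤ Order.height (PrimeSpectrum.comap φ P) := by
  induction n with
  | zero =>
    intro P _
    refine hi.trans (Order.height_mono ?_)
    intro x hx
    have : φ x = 0 := hp hx
    show φ x ∈ P.asIdeal
    rw [this]; exact zero_mem _
  | succ n ih =>
    intro P hP
    obtain ⟨P', hP', hh⟩ := exists_lt_of_succ_le_height hP
    have h1 := ih P' hh
    have hlt : PrimeSpectrum.comap φ P' < PrimeSpectrum.comap φ P := by
      refine lt_of_le_of_ne (Ideal.comap_mono hP'.le) fun h => hP'.ne ?_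
      exact PrimeSpectrum.comap_injective_of_surjective φ hφ h
    have h2 := Order.height_add_one_le hlt
    refine le_trans ?_ h2
    rw [← add_assoc]
    push_cast at h1 ⊢
    gcongr

theorem QuadSys.residue {k A κ : Type*} [Field k] [IsAlgClosed k] [CommRing A] [Algebra k A]
    [Algebra.FiniteType k A] [Field κ] [Algebra A κ] [Algebra k κ] [IsScalarTower k A κ]
    (hsurj : ∀ z : κ, ∃ a b : A, z = algebraMap A κ a / algebraMap A κ b)
    (d i : ℕ) (hd : ringKrullDim A ≤ d) (p : PrimeSpectrum A)
    (hp : p.asIdeal = RingHom.ker (algebraMap A κ))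
    (hi : (i : ℕ∞) ≤ Order.height p) : QuadSys (d - i) κ := by
  let π : A →ₐ[k] κ := IsScalarTower.toAlgHom k A κ
  let B := A ⧸ RingHom.ker π
  have hpk : p.asIdeal = RingHom.ker π := hp
  have hBn : Nontrivial B := Ideal.Quotient.nontrivial_iff.2 (by rw [← hpk]; exact p.2.ne_top)
  let ρ : B →ₐ[k] κ := Ideal.kerLiftAlg π
  obtain ⟨s, g, hg, hgi⟩ := exists_integral_inj_algHom_of_fg k B
  -- dimension count
  have hs : i + s ≤ d := by
    let _ : Algebra (MvPolynomial (Fin s) k) B := g.toRingHom.toAlgebra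
    have : Algebra.IsIntegral (MvPolynomial (Fin s) k) B := ⟨hgi⟩
    have h1 := vanishing_height s (0 : Fin s → k)
    let v : PrimeSpectrum (MvPolynomial (Fin s) k) :=
      ⟨MvPolynomial.vanishingIdeal k {(0 : Fin s → k)}, inferInstance⟩
    have h2 : (s : ℕ∞) ≤ Order.height v := by
      rw [← PrimeSpectrum.height_eq_orderHeight]; exact h1
    obtain ⟨P, -, hP⟩ := going_up_height (R := MvPolynomial (Fin s) k) (S := B) hg s v h2
    have h3 := height_add_le (Ideal.Quotient.mk (RingHom.ker π)) Ideal.Quotient.mk_surjective p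
      (by rw [Ideal.mk_ker, hpk]) i hi s P hP
    have h4 := Order.height_le_krullDim
      (PrimeSpectrum.comap (Ideal.Quotient.mk (RingHom.ker π)) P)
    have h5 : (((i + s : ℕ) : ℕ∞) : WithBot ℕ∞) ≤ d :=
      (WithBot.coe_le_coe.2 h3).trans (h4.trans hd)
    exact_mod_cast h5
  let t : Fin s → κ := fun j => ρ (g (MvPolynomial.X j))
  let E := IntermediateField.adjoin k (Set.range t)
  let ψ : MvPolynomial (Fin s) k →ₐ[k] E :=
    MvPolynomial.aeval (fun j => ⟨t j, IntermediateField.subset_adjoin _ _ ⟨j, rfl⟩⟩)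
  have hψ : (E.val.comp ψ) = ρ.comp g := by
    refine MvPolynomial.algHom_ext fun j => ?_
    simp [ψ, t]
  have hintg : ∀ b : B, IsIntegral E (ρ b) := by
    intro b
    obtain ⟨P, hP, hPb⟩ := hgi b
    refine ⟨P.map ψ.toRingHom, hP.map _, ?_⟩
    rw [Polynomial.eval₂_map]
    have h1 : (algebraMap E κ).comp ψ.toRingHom = ρ.toRingHom.comp g.toRingHom := by
      ext x
      · exact DFunLike.congr_fun hψ _
      · exact DFunLike.congr_fun hψ _
    rw [h1]
    have h2 := congrArg ρ.toRingHom hPb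
    rw [Polynomial.hom_eval₂, map_zero] at h2
    exact h2
  have halg : Algebra.IsAlgebraic E κ := ⟨fun z => by
    obtain ⟨a, b, rfl⟩ := hsurj z
    have hE : ∀ c : A, IsAlgebraic E (algebraMap A κ c) := fun c =>
      IsIntegral.isAlgebraic (hintg (Ideal.Quotient.mk (RingHom.ker π) c))
    rw [div_eq_mul_inv]
    exact (hE a).mul (hE b).inv⟩
  exact ((QuadSys.adjoin (k := k) s t).algebraic_ext (K := κ)).mono (by omega)

open Polynomial in
theorem hensel_quadratic {R : Type*} [CommRing R] (I : Ideal R) [HenselianRing R I]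
    (a b c : R) (hb : IsUnit b) (hc : c ∈ I) : ∃ t ∈ I, c + t * b + t * t * a = 0 := by
  let f : R[X] := X ^ 2 + C b * X + C (a * c)
  have hf : f.Monic := by
    show (X ^ 2 + C b * X + C (a * c)).Monic
    monicity!
  obtain ⟨u, hu, hub⟩ := HenselianRing.is_henselian (I := I) f hf (-b)
    (by
      have : f.eval (-b) = a * c := by simp [f]; ring
      rw [this]; exact I.mul_mem_left _ hc)
    (by
      have : f.derivative.eval (-b) = -b := by simp [f]; ring
      rw [this]; exact hb.neg.map _)
  have huu : IsUnit u := by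
    have hj := HenselianRing.jac (R := R) (I := I)
    have h1 : u - -b ∈ (⊥ : Ideal R).jacobson := hj hub
    have h2 := Ideal.mem_jacobson_bot.1 h1 (-(hb.unit⁻¹ : Rˣ))
    have h3 : (u - -b) * (-(hb.unit⁻¹ : Rˣ)) + 1 = u * (-(hb.unit⁻¹ : Rˣ)) := by
      have : b * (hb.unit⁻¹ : Rˣ) = 1 := hb.mul_val_inv
      linear_combination -this
    rw [h3] at h2
    exact isUnit_of_mul_isUnit_left h2
  obtain ⟨w, hw⟩ := huu.exists_right_inv
  refine ⟨c * w, I.mul_mem_right _ hc, ?_⟩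
  have hroot : u ^ 2 + b * u + a * c = 0 := by simpa [f, IsRoot] using hu
  linear_combination (c * w * w) * hroot + (-c * (u * w + 1) - c * b * w) * hw

theorem isotropic_lift {R κ : Type*} [CommRing R] [Field κ] (I : Ideal R) [HenselianRing R I]
    (π : R →+* κ) (hπ : Function.Surjective π) (hker : RingHom.ker π = I)
    (r : ℕ) (hκ : QuadSys r κ) (n : ℕ) (hn : 2 ^ r + 1 < n)
    (q : QuadraticForm R (Fin n → R)) (v₀ : Fin n → R)
    (hsd : ∀ v : Fin n → R, (∀ w, QuadraticMap.polar q v w ∈ I) →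
      v ∈ Submodule.span R {v₀} ⊔ (I • (⊤ : Submodule R (Fin n → R)))) :
    ∃ v : Fin n → R, v ≠ 0 ∧ q v = 0 := by
  classical
  obtain ⟨Bq, hBq⟩ := LinearMap.BilinMap.toQuadraticMap_surjective (R := R) q
  obtain ⟨j₀, hj₀⟩ : ∃ j₀ : Fin n, π (v₀ j₀) ≠ 0 ∨ ∀ j, π (v₀ j) = 0 := by
    by_cases h : ∃ j, π (v₀ j) ≠ 0
    · exact ⟨h.choose, Or.inl h.choose_spec⟩
    · push Not at h
      exact ⟨⟨0, by have := Nat.two_pow_pos r; omega⟩, Or.inr h⟩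
  have hqv : ∀ v : Fin n → R, q v = ∑ i, ∑ j, Bq (Pi.single i 1) (Pi.single j 1) * v i * v j := by
    intro v
    rw [← hBq, LinearMap.BilinMap.toQuadraticMap_apply]
    conv_lhs => rw [pi_eq_sum_univ' v]
    simp only [map_sum, LinearMap.sum_apply, map_smul, LinearMap.smul_apply, smul_eq_mul,
      Finset.mul_sum]
    rw [Finset.sum_comm]
    refine Finset.sum_congr rfl fun i _ => Finset.sum_congr rfl fun j _ => ?_
    ring
  obtain ⟨y, hy, hz⟩ := hκ.fintype (ι := Unit) (σ := {j : Fin n // j ≠ j₀})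
    (fun _ i j => π (Bq (Pi.single i.1 1) (Pi.single j.1 1))) (by
      simp
      omega)
  have hlift : ∀ j : Fin n, ∃ x : R, π x = if h : j ≠ j₀ then y ⟨j, h⟩ else 0 := fun j => hπ _
  choose w hw using hlift
  have hw0 : π (w j₀) = 0 := by rw [hw]; simp
  have hwy : ∀ j : {j : Fin n // j ≠ j₀}, π (w j.1) = y j := fun j => by
    rw [hw, dif_pos j.2]
  have hqw : q w ∈ I := by
    rw [← hker, RingHom.mem_ker, hqv]
    rw [← hz ()]
    simp only [map_sum, map_mul]
    have hsub : ∀ f : Fin n → κ, f j₀ = 0 → ∑ j, f j = ∑ j : {j : Fin n // j ≠ j₀}, f j.1 := by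
      intro f hf
      rw [← Finset.add_sum_erase _ _ (Finset.mem_univ j₀), hf, zero_add]
      exact Finset.sum_subtype _ (by simp) f
    rw [hsub _ (by simp [hw0])]
    refine Finset.sum_congr rfl fun i _ => ?_
    rw [hsub _ (by simp [hw0])]
    refine Finset.sum_congr rfl fun j _ => ?_
    rw [hwy, hwy]
  have hwne : ∃ j, j ≠ j₀ ∧ π (w j) ≠ 0 := by
    by_contra! h
    apply hy
    funext j
    rw [← hwy, h j.1 j.2]; rfl
  obtain ⟨u, hu⟩ : ∃ u, QuadraticMap.polar q w u ∉ I := by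
    by_contra! h
    have hmem := hsd w h
    obtain ⟨j, hj, hjw⟩ := hwne
    obtain ⟨a, ha, b, hb, hab⟩ := Submodule.mem_sup.1 hmem
    obtain ⟨c, rfl⟩ := Submodule.mem_span_singleton.1 ha
    have hb' : ∀ j, π (b j) = 0 := by
      intro j
      rw [← RingHom.mem_ker, hker]
      refine Submodule.smul_induction_on (p := fun b => b j ∈ I) hb ?_ ?_
      · intro x hx v _
        exact I.mul_mem_right _ hx
      · intro x y hx hy
        exact I.add_mem hx hy
    have hcomp : ∀ j, π c * π (v₀ j) = π (w j) := by
      intro j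
      rw [← hab]
      simp [hb']
    rcases hj₀ with h0 | h0
    · have := hcomp j₀
      rw [hw0] at this
      have hc : π c = 0 := (mul_eq_zero.1 this).resolve_right h0
      exact hjw (by rw [← hcomp j, hc, zero_mul])
    · exact hjw (by rw [← hcomp j, h0, mul_zero])
  have huu : IsUnit (QuadraticMap.polar q w u) := by
    obtain ⟨z, hz⟩ := hπ (π (QuadraticMap.polar q w u))⁻¹
    have hne : π (QuadraticMap.polar q w u) ≠ 0 := by
      rw [← hker] at hu; exact hu
    have h1 : QuadraticMap.polar q w u * z - 1 ∈ I := by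
      rw [← hker, RingHom.mem_ker, map_sub, map_mul, hz, mul_inv_cancel₀ hne, map_one, sub_self]
    have h2 := Ideal.mem_jacobson_bot.1 ((HenselianRing.jac (R := R) (I := I)) h1) 1
    rw [mul_one, sub_add_cancel] at h2
    exact isUnit_of_mul_isUnit_left h2
  obtain ⟨t, ht, hroot⟩ := hensel_quadratic I (q u) _ (q w) huu hqw
  refine ⟨w + t • u, ?_, ?_⟩
  · intro h0
    obtain ⟨j, hj, hjw⟩ := hwne
    have := congrArg π (congrFun h0 j)
    rw [← hker] at ht
    rw [Pi.add_apply, Pi.smul_apply, smul_eq_mul, map_add, map_mul, RingHom.mem_ker.1 ht] at this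
    simp at this
    exact hjw this
  · have h1 : q (w + t • u) = q w + q (t • u) + QuadraticMap.polar q w (t • u) :=
      QuadraticMap.map_add q _ _
    rw [h1, QuadraticMap.map_smul, QuadraticMap.polar_smul_right, smul_eq_mul, smul_eq_mul,
      ← hroot]
    ring

theorem QuadSys.residueField {k A O : Type*} [Field k] [IsAlgClosed k] [CommRing A]
    [CommRing O] [IsLocalRing O] [Algebra A O] (φ : k →+* A) (hφ : φ.FiniteType)
    (p : PrimeSpectrum A) [IsLocalization.AtPrime O p.asIdeal]
    (d i : ℕ) (hd : ringKrullDim A ≤ d)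
    (hi : (i : ℕ∞) ≤ Order.height p) : QuadSys (d - i) (IsLocalRing.ResidueField O) := by
  let _ : Algebra k A := φ.toAlgebra
  have : Algebra.FiniteType k A := hφ
  let _ : Algebra k (IsLocalRing.ResidueField O) :=
    ((algebraMap A (IsLocalRing.ResidueField O)).comp φ).toAlgebra
  have : IsScalarTower k A (IsLocalRing.ResidueField O) :=
    IsScalarTower.of_algebraMap_eq (fun _ => rfl)
  refine QuadSys.residue (k := k) (A := A) ?_ d i hd p ?_ hi
  · intro z
    obtain ⟨o, rfl⟩ := IsLocalRing.residue_surjective z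
    obtain ⟨⟨a, s⟩, hs⟩ := IsLocalization.surj p.asIdeal.primeCompl o
    refine ⟨a, s, ?_⟩
    have h1 := congrArg (IsLocalRing.residue O) hs
    rw [map_mul] at h1
    have h2 : IsLocalRing.residue O (algebraMap A O s) ≠ 0 := by
      rw [IsLocalRing.residue_ne_zero_iff_isUnit]
      exact IsLocalization.map_units O s
    exact eq_div_of_mul_eq h2 h1
  · ext a
    rw [RingHom.mem_ker, ← IsLocalization.AtPrime.to_map_mem_maximal_iff O p.asIdeal a,
      ← IsLocalRing.residue_eq_zero_iff]
    rfl

open AlgebraicGeometry in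
theorem quadSys_stalk {k : Type} [Field k] [IsAlgClosed k]
    (X : Scheme) (f : X ⟶ Spec (CommRingCat.of k)) [LocallyOfFiniteType f]
    (d : ℕ) (hdim : topologicalKrullDim X = (d : ℕ∞))
    (i : ℕ) (x : X) (c : Fin (i + 1) → X)
    (hchain : ∀ j : Fin i, c j.castSucc ≠ c j.succ ∧ c j.castSucc ⤳ c j.succ)
    (hlast : c (Fin.last i) = x) :
    QuadSys (d - i) (IsLocalRing.ResidueField (X.presheaf.stalk x)) := by
  obtain ⟨U, hU, hxU, -⟩ := exists_isAffineOpen_mem_and_subset (x := x) (U := ⊤) trivial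
  have hcU : ∀ j, c j ∈ U := by
    intro j
    induction j using Fin.reverseInduction with
    | last => rw [hlast]; exact hxU
    | cast j ih => exact (hchain j).2.mem_open U.isOpen ih
  let P : Fin (i + 1) → PrimeSpectrum Γ(X, U) := fun j => hU.primeIdealOf ⟨c j, hcU j⟩
  have hP : ∀ j, hU.fromSpec (P j) = c j := fun j => hU.fromSpec_primeIdealOf ⟨c j, hcU j⟩
  have hlt : ∀ j : Fin i, P j.castSucc < P j.succ := by
    intro j
    refine lt_of_le_of_ne ?_ ?_
    · rw [PrimeSpectrum.le_iff_specializes]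
      refine (hU.fromSpec.isOpenEmbedding.isInducing.specializes_iff).1 ?_
      rw [hP, hP]
      exact (hchain j).2
    · intro h
      apply (hchain j).1
      rw [← hP, ← hP, h]
  have hht : ∀ j : Fin (i + 1), ((j : ℕ) : ℕ∞) ≤ Order.height (P j) := by
    intro j
    induction j using Fin.induction with
    | zero => simp
    | succ j ih =>
      have h2 := Order.height_add_one_le (hlt j)
      refine le_trans ?_ h2
      simp only [Fin.val_succ, Fin.val_castSucc] at ih ⊢
      push_cast
      gcongr
  have hd : ringKrullDim Γ(X, U) ≤ d := by
    rw [← PrimeSpectrum.topologicalKrullDim_eq_ringKrullDim]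
    have := hU.fromSpec.isOpenEmbedding.isInducing.topologicalKrullDim_le
    rw [hdim] at this
    exact this
  have hft : (f.appLE ⊤ U le_top).hom.FiniteType :=
    f.finiteType_appLE (isAffineOpen_top _) hU _
  let φ : k →+* Γ(X, U) := (f.appLE ⊤ U le_top).hom.comp
    (Scheme.ΓSpecIso (CommRingCat.of k)).inv.hom
  have hφ : φ.FiniteType := hft.comp (RingHom.FiniteType.of_surjective _
    (Scheme.ΓSpecIso (CommRingCat.of k)).symm.commRingCatIsoToRingEquiv.surjective)
  let _ : Algebra Γ(X, U) (X.presheaf.stalk x) :=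
    TopCat.Presheaf.algebra_section_stalk X.presheaf (⟨x, hxU⟩ : U)
  have hloc : IsLocalization.AtPrime (X.presheaf.stalk x) (P (Fin.last i)).asIdeal := by
    have := hU.isLocalization_stalk ⟨x, hxU⟩
    have h2 : P (Fin.last i) = hU.primeIdealOf ⟨x, hxU⟩ := by
      simp only [P, hlast]
    rw [h2]
    exact this
  exact QuadSys.residueField φ hφ (P (Fin.last i)) d i hd (by simpa using hht (Fin.last i))


set_option maxHeartbeats 1000000 in
theorem isotropic_of_simple_degeneration_over_completed_stalk
    {k : Type} [Field k] [IsAlgClosed k] (hchar : (2 : k) ≠ 0)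
    (X : Scheme) (f : X ⟶ Spec (CommRingCat.of k)) [LocallyOfFiniteType f]
    [IsIntegral X] [IsLocallyNoetherian X]
    -- X is regular: each stalk is a regular local ring
    (hreg : ∀ y : X, ∃ s : Finset (X.presheaf.stalk y),
      Ideal.span (s : Set (X.presheaf.stalk y)) =
        IsLocalRing.maximalIdeal (X.presheaf.stalk y) ∧
      (s.card : WithBot ℕ∞) = ringKrullDim (X.presheaf.stalk y))
    (d : ℕ) (hdim : topologicalKrullDim X = (d : ℕ∞))
    (i : ℕ) (hi : 0 < i)
    -- x has codimension ≥ i: a strictly specializing chain of length i ending at x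
    (x : X) (c : Fin (i + 1) → X)
    (hchain : ∀ j : Fin i, c j.castSucc ≠ c j.succ ∧ c j.castSucc ⤳ c j.succ)
    (hlast : c (Fin.last i) = x)
    (n : ℕ) (hn : 2 ^ (d - i) + 1 < n)
    (q : QuadraticForm (completedStalk X x) (Fin n → completedStalk X x))
    -- simple degeneration: the radical of the reduction of q has rank ≤ 1
    (hsd : ∃ v₀ : Fin n → completedStalk X x,
      QuadraticMap.residualRadical
        (Ideal.map (algebraMap (X.presheaf.stalk x) (completedStalk X x))
          (IsLocalRing.maximalIdeal (X.presheaf.stalk x))) q ≤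
        Submodule.span (completedStalk X x) {v₀} ⊔
          (Ideal.map (algebraMap (X.presheaf.stalk x) (completedStalk X x))
            (IsLocalRing.maximalIdeal (X.presheaf.stalk x)) •
            (⊤ : Submodule (completedStalk X x) (Fin n → completedStalk X x)))) :
    -- q is isotropic over K_x (equivalently, over the domain Ô_{S,x})
    ∃ v : Fin n → completedStalk X x, v ≠ 0 ∧ q v = 0 := by
  obtain ⟨v₀, hv₀⟩ := hsd
  have hfg : (IsLocalRing.maximalIdeal (X.presheaf.stalk x)).FG :=
    (isNoetherianRing_iff_ideal_fg _).1 inferInstance _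
  have : IsAdicComplete (Ideal.map (algebraMap (X.presheaf.stalk x) (completedStalk X x))
      (IsLocalRing.maximalIdeal (X.presheaf.stalk x))) (completedStalk X x) :=
    AdicCompletion.isAdicComplete_self _ hfg
  exact isotropic_lift (κ := IsLocalRing.ResidueField (X.presheaf.stalk x)) _
    (AdicCompletion.evalOneₐ (IsLocalRing.maximalIdeal (X.presheaf.stalk x))).toRingHom
    (AdicCompletion.evalOneₐ_surjective _)
    (AdicCompletion.ker_evalOneₐ_eq_map _ hfg)
    (d - i) (quadSys_stalk X f d hdim i x c hchain hlast) n hn q v₀ (fun v hv => hv₀ hv)
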